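/- Let A and B be dg categories. Suppose given a map f on objects and, for every n ≥ 1 and objects A₁, …, A_{n+1} of A, degree-0 graded maps f_n: S(A_n,A_{n+1})⊗…⊗S(A_1,A_2) → S(fA_1,fA_{n+1}) which strictly respect identities (f₁(s·id_A) = s·id_{fA} and f_n(…, s·id, …) = 0 for n ≥ 2). Then for every chain of composable morphisms α^n, …, α^1 of A in which some α^i is a scalar multiple of an identity, the defining A∞-functor equation Σ_{i=0}^{n−1} f_n∘(1^{⊗i}⊗b₁⊗1^{⊗n−(i+1)}) + Σ_{i=0}^{n−2} f_{n−1}∘(1^{⊗i}⊗b₂⊗1^{⊗n−(i+2)}) = Σ_{i=1}^{n−1} b₂∘(f_i⊗f_{n−i}) + b₁∘f_n is automatically satisfied when evaluated at (sα^n, …, sα^1). -/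

import Mathlib

/-! Core formal framework: dg categories over a field `k`, given by explicit data
(`DGData`) together with the dg-category axioms (`IsDGCat`), following the
conventions of the paper: hom-sets are `ℤ`-graded `k`-vector spaces, `d` has
degree `1`, composition is associative of degree `0`, identities are closed of
degree `0`. -/

namespace P

universe u v

structure DGData (k : Type) [Field k] where
  Obj : Type u
  Hom : Obj → Obj → ℤ → Type v
  homAdd : ∀ A B i, AddCommGroup (Hom A B i)
  homMod : ∀ A B i, Module k (Hom A B i)
  d : ∀ {A B : Obj} {i : ℤ}, Hom A B i → Hom A B (i + 1)
  comp : ∀ {A B C : Obj} {i j : ℤ}, Hom B C j → Hom A B i → Hom A C (j + i)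
  id : ∀ A : Obj, Hom A A 0

attribute [instance] DGData.homAdd DGData.homMod

variable {k : Type} [Field k]

/-- Transport of a morphism along an equality of degrees. -/
def DGData.cast (D : DGData k) {A B : D.Obj} {i i' : ℤ} (h : i = i')
    (x : D.Hom A B i) : D.Hom A B i' := h ▸ x

/-- Transport of a morphism along equalities of its source, target and degree. -/
def DGData.hcast (D : DGData k) {A A' B B' : D.Obj} {i i' : ℤ}
    (hA : A = A') (hB : B = B') (hi : i = i') (x : D.Hom A B i) :
    D.Hom A' B' i' := by
  subst hA; subst hB; subst hi; exact x

/-- The axioms making the data `D` a dg category: hom-sets are complexes of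
`k`-vector spaces, composition is `k`-bilinear, the graded Leibniz rule holds,
composition is associative, and identities are closed two-sided units. -/
structure IsDGCat (D : DGData k) : Prop where
  d_add : ∀ {A B : D.Obj} {g : ℤ} (x y : D.Hom A B g), D.d (x + y) = D.d x + D.d y
  d_smul : ∀ {A B : D.Obj} {g : ℤ} (c : k) (x : D.Hom A B g), D.d (c • x) = c • D.d x
  comp_add_left : ∀ {A B C : D.Obj} {g h : ℤ} (β₁ β₂ : D.Hom B C h) (α : D.Hom A B g),
      D.comp (β₁ + β₂) α = D.comp β₁ α + D.comp β₂ α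
  comp_add_right : ∀ {A B C : D.Obj} {g h : ℤ} (β : D.Hom B C h) (α₁ α₂ : D.Hom A B g),
      D.comp β (α₁ + α₂) = D.comp β α₁ + D.comp β α₂
  comp_smul_left : ∀ {A B C : D.Obj} {g h : ℤ} (c : k) (β : D.Hom B C h) (α : D.Hom A B g),
      D.comp (c • β) α = c • D.comp β α
  comp_smul_right : ∀ {A B C : D.Obj} {g h : ℤ} (c : k) (β : D.Hom B C h) (α : D.Hom A B g),
      D.comp β (c • α) = c • D.comp β α
  d_d : ∀ {A B : D.Obj} {g : ℤ} (x : D.Hom A B g), D.d (D.d x) = 0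
  leibniz : ∀ {A B C : D.Obj} {g h : ℤ} (β : D.Hom B C h) (α : D.Hom A B g),
      D.d (D.comp β α) =
        D.cast (by ring) (D.comp (D.d β) α) +
          ((-1 : k) ^ h) • D.cast (by ring) (D.comp β (D.d α))
  assoc : ∀ {A B C E : D.Obj} {g h l : ℤ} (γ : D.Hom C E l) (β : D.Hom B C h)
      (α : D.Hom A B g),
      D.comp γ (D.comp β α) = D.cast (by ring) (D.comp (D.comp γ β) α)
  id_comp : ∀ {A B : D.Obj} {g : ℤ} (α : D.Hom A B g),
      D.cast (zero_add g) (D.comp (D.id B) α) = α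
  comp_id : ∀ {A B : D.Obj} {g : ℤ} (α : D.Hom A B g),
      D.cast (add_zero g) (D.comp α (D.id A)) = α
  d_id : ∀ A : D.Obj, D.d (D.id A) = 0

/-- A morphism is closed if its differential vanishes. -/
def DGData.IsClosed (D : DGData k) {A B : D.Obj} {g : ℤ} (x : D.Hom A B g) : Prop :=
  D.d x = 0

/-- The Maurer-Cartan equation `d(p) + p ∘ p = 0` for a degree `1` endomorphism. -/
def DGData.MC (D : DGData k) {A : D.Obj} (p : D.Hom A A 1) : Prop :=
  D.d p + D.comp p p = 0

/-- A chain of `n` (in fact, infinitely many; only the first `n` are ever used)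
composable morphisms `α m : A m ⟶ A (m+1)`, where `α m` is recorded together
with its *shifted* degree `g m`, i.e. `α m` lies in degree `g m + 1`.  This
encodes an element `s α_n ⊗ ⋯ ⊗ s α_1` of `S(A n, A (n+1)) ⊗ ⋯ ⊗ S(A 0, A 1)`
(the chain is indexed so that index `0` is the first morphism `α^1`). -/
abbrev DGData.Chain (D : DGData k) (A : ℕ → D.Obj) (g : ℕ → ℤ) : Type _ :=
  ∀ m : ℕ, D.Hom (A m) (A (m + 1)) (g m + 1)

/-- Partial sums of the (shifted) degrees of a chain. -/
def psum (g : ℕ → ℤ) (n : ℕ) : ℤ := ∑ m ∈ Finset.range n, g m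

lemma psum_succ (g : ℕ → ℤ) (r : ℕ) : psum g (r + 1) = psum g r + g r :=
  Finset.sum_range_succ g r

lemma psum_one (g : ℕ → ℤ) : psum g 1 = g 0 := by simp [psum]

lemma psum_two (g : ℕ → ℤ) : psum g 2 = g 0 + g 1 := by
  simp [psum, Finset.sum_range_succ]

lemma psum_const_zero (n : ℕ) : psum (fun _ => (0 : ℤ)) n = 0 := by simp [psum]

lemma psum_shift (g : ℕ → ℤ) (t : ℕ) :
    ∀ r, psum (fun m => g (t + m)) r = psum g (t + r) - psum g t := by
  intro r
  induction r with
  | zero => simp [psum]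
  | succ r ih => rw [psum_succ, ih, Nat.add_succ, psum_succ]; ring

/-- Update of a chain in one slot (keeping the degree). -/
def DGData.upd0 (D : DGData k) {A : ℕ → D.Obj} {g : ℕ → ℤ} (α : D.Chain A g)
    (m : ℕ) (v : D.Hom (A m) (A (m + 1)) (g m + 1)) : D.Chain A g := fun t =>
  if h : t = m then (by subst h; exact v) else α t

/-- Objects of the chain obtained by replacing the `j` consecutive entries
starting at position `l` by a single entry. -/
def splObj {τ : Type u} (A : ℕ → τ) (l j : ℕ) : ℕ → τ := fun t =>
  if t ≤ l then A t else A (t + j - 1)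

/-- Degrees of the spliced chain; the new entry at position `l` has (shifted)
degree `w`. -/
def splG (g : ℕ → ℤ) (l j : ℕ) (w : ℤ) : ℕ → ℤ := fun t =>
  if t < l then g t else if t = l then w else g (t + j - 1)

lemma splObj_le {τ : Type u} (A : ℕ → τ) {l j t : ℕ} (h : t ≤ l) :
    splObj A l j t = A t := if_pos h

lemma splObj_gt {τ : Type u} (A : ℕ → τ) {l j t : ℕ} (h : ¬ t ≤ l) :
    splObj A l j t = A (t + j - 1) := if_neg h

lemma splObj_zero {τ : Type u} (A : ℕ → τ) (l j : ℕ) : splObj A l j 0 = A 0 :=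
  splObj_le A (Nat.zero_le l)

lemma splObj_last {τ : Type u} (A : ℕ → τ) {l j n : ℕ} (h1 : 1 ≤ j)
    (h2 : l + j ≤ n) : splObj A l j (n - j + 1) = A n := by
  unfold splObj
  rw [if_neg (by omega)]
  exact congrArg A (by omega)

lemma splG_lt {g : ℕ → ℤ} {l j : ℕ} {w : ℤ} {t : ℕ} (h : t < l) :
    splG g l j w t = g t := by unfold splG; rw [if_pos h]

lemma splG_eq {g : ℕ → ℤ} {l j : ℕ} {w : ℤ} {t : ℕ} (h : t = l) :
    splG g l j w t = w := by unfold splG; rw [if_neg (by omega), if_pos h]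

lemma splG_gt {g : ℕ → ℤ} {l j : ℕ} {w : ℤ} {t : ℕ} (h1 : ¬ t < l) (h2 : ¬ t = l) :
    splG g l j w t = g (t + j - 1) := by unfold splG; rw [if_neg h1, if_neg h2]

/-- The sum of the degrees of the spliced chain, when the inserted entry has
the degree of a degree `1` operation applied to the block it replaces. -/
lemma psum_splG (g : ℕ → ℤ) {l j n : ℕ} (h1 : 1 ≤ j) (h2 : l + j ≤ n) :
    psum (splG g l j (psum (fun m => g (l + m)) j + 1)) (n - j + 1) =
      psum g n + 1 := by
  have hln : l + 1 ≤ n - j + 1 := by omega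
  rw [psum, ← Finset.sum_range_add_sum_Ico _ hln]
  have e1 : (∑ t ∈ Finset.range (l + 1),
      splG g l j (psum (fun m => g (l + m)) j + 1) t)
      = psum g l + (psum (fun m => g (l + m)) j + 1) := by
    rw [Finset.sum_range_succ]
    congr 1
    · exact Finset.sum_congr rfl fun t ht => splG_lt (Finset.mem_range.mp ht)
    · exact splG_eq rfl
  have e2 : (∑ t ∈ Finset.Ico (l + 1) (n - j + 1),
      splG g l j (psum (fun m => g (l + m)) j + 1) t)
      = ∑ u ∈ Finset.Ico (l + j) n, g u := by
    rw [Finset.sum_Ico_eq_sum_range, Finset.sum_Ico_eq_sum_range]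
    have hc : n - j + 1 - (l + 1) = n - (l + j) := by omega
    rw [hc]
    refine Finset.sum_congr rfl fun i hi => ?_
    rw [splG_gt (by omega) (by omega)]
    congr 1
    omega
  have e3 : (∑ u ∈ Finset.Ico (l + j) n, g u) = psum g n - psum g (l + j) := by
    rw [psum, psum, Finset.sum_Ico_eq_sub _ (by omega : l + j ≤ n)]
  rw [e1, e2, e3, psum_shift g l j]
  ring

/-- The spliced chain: replace the `j` entries starting at position `l` by the
single entry `v`. -/
def DGData.splChain (D : DGData k) {A : ℕ → D.Obj} {g : ℕ → ℤ} (α : D.Chain A g)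
    (l j : ℕ) (hj : 1 ≤ j) {w : ℤ} (v : D.Hom (A l) (A (l + j)) (w + 1)) :
    D.Chain (splObj A l j) (splG g l j w) := fun t =>
  if h1 : t < l then
    D.hcast (splObj_le A (le_of_lt h1)).symm (splObj_le A (by omega)).symm
      (by rw [splG_lt h1]) (α t)
  else if h2 : t = l then
    D.hcast (by rw [show t = l from h2]; exact (splObj_le A le_rfl).symm)
      (by rw [show t = l from h2, splObj_gt A (show ¬ l + 1 ≤ l by omega)]
          exact congrArg A (by omega))
      (by rw [splG_eq h2]) v
  else
    D.hcast (splObj_gt A (by omega)).symm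
      (by rw [splObj_gt A (show ¬ t + 1 ≤ l by omega)]; exact congrArg A (by omega))
      (by rw [splG_gt h1 h2]) (α (t + j - 1))

end P

namespace P

variable {k : Type} [Field k]

/-! ## A∞-functors between dg categories

Dg categories are regarded as A∞-categories via `b₁(sα) := -s(dα)`,
`b₂(sα ⊗ sβ) := (-1)^{|α|} s(α ∘ β)`, `b_n := 0` for `n ≥ 3` (Construction
`dg_to_Ainf` of the paper), using Fukaya's sign convention.  We encode an
element `s α_n ⊗ ⋯ ⊗ s α_1` of `S(A n, A (n+1)) ⊗ ⋯ ⊗ S(A 0, A 1)` as a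
`DGData.Chain`, recording each `α m` together with its *shifted* degree `g m`.
An A∞-functor is then given by a map on objects together with, for every `n`,
a degree-0 component `f_n` sending such a chain to an element of
`S(f A 0, f A n)`, i.e. a morphism of degree `psum g n + 1`. -/

/-- The data of an A∞-functor between dg categories: its action on objects and
its components `f_n`, `n ≥ 1` (the value on chains of length `n` only depends
on the first `n` entries of the chain; this is part of `IsAInfFun` below). -/
structure AInfFunData (D E : DGData k) where
  obj : D.Obj → E.Obj
  f : ∀ (n : ℕ) (A : ℕ → D.Obj) (g : ℕ → ℤ), D.Chain A g →
    E.Hom (obj (A 0)) (obj (A n)) (psum g n + 1)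

/-- The value of `b_j` (for the A∞-structure of a dg category) on the block of
`j` consecutive entries of the chain `α` starting at position `l`:
`b₁(sα) = -s(dα)`, `b₂(sα ⊗ sβ) = (-1)^{|α|} s(α ∘ β)`, and `b_j = 0`
otherwise. -/
def DGData.blockVal (D : DGData k) {A : ℕ → D.Obj} {g : ℕ → ℤ}
    (α : D.Chain A g) (l : ℕ) :
    (j : ℕ) → D.Hom (A l) (A (l + j)) ((psum (fun m => g (l + m)) j + 1) + 1)
  | 1 => D.cast (by simp [psum_one]) (- D.d (α l))
  | 2 => ((-1 : k) ^ (g (l + 1) + 1)) •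
      D.cast (by simp only [psum_two, Nat.add_zero]; ring)
        (D.comp (α (l + 1)) (α l))
  | 0 => 0
  | (_ + 3) => 0

/-- The left hand side of the `n`-th defining equation of an A∞-functor
between dg categories (Equation (main) of the paper): the sum of the terms
`f_{i+1+l} ∘ (1^{⊗i} ⊗ b_j ⊗ 1^{⊗l})`, `j ∈ {1,2}`, with the signs coming from
Fukaya's convention. -/
def eqLhs {D E : DGData k} (F : AInfFunData D E) (n : ℕ) (A : ℕ → D.Obj)
    (g : ℕ → ℤ) (α : D.Chain A g) :
    E.Hom (F.obj (A 0)) (F.obj (A n)) ((psum g n + 1) + 1) :=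
  ∑ x ∈ Finset.range n ×ˢ Finset.range 3,
    if h : 1 ≤ x.2 ∧ x.1 + x.2 ≤ n then
      ((-1 : k) ^ (psum g n - psum g (x.1 + x.2))) •
        E.hcast (congrArg F.obj (splObj_zero A x.1 x.2))
          (congrArg F.obj (splObj_last A h.1 h.2))
          (by rw [psum_splG g h.1 h.2])
          (F.f (n - x.2 + 1) (splObj A x.1 x.2)
            (splG g x.1 x.2 (psum (fun m => g (x.1 + m)) x.2 + 1))
            (D.splChain α x.1 x.2 h.1 (D.blockVal α x.1 x.2)))
    else 0

/-- The right hand side of the `n`-th defining equation of an A∞-functor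
between dg categories: `∑_{t=1}^{n-1} b₂ ∘ (f_{n-t} ⊗ f_t) + b₁ ∘ f_n`. -/
def eqRhs {D E : DGData k} (F : AInfFunData D E) (n : ℕ) (A : ℕ → D.Obj)
    (g : ℕ → ℤ) (α : D.Chain A g) :
    E.Hom (F.obj (A 0)) (F.obj (A n)) ((psum g n + 1) + 1) :=
  (∑ t ∈ Finset.range n,
    if h : 1 ≤ t ∧ t < n then
      ((-1 : k) ^ (psum g n - psum g t + 1)) •
        E.hcast rfl (congrArg F.obj (congrArg A (by omega : t + (n - t) = n)))
          (by rw [psum_shift g t (n - t), show t + (n - t) = n from by omega]; ring)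
          (E.comp
            (F.f (n - t) (fun m => A (t + m)) (fun m => g (t + m)) (fun m => α (t + m)))
            (F.f t A g α))
    else 0) +
  (- (E.d (F.f n A g α)))

/-- The axioms for `F` to be an A∞-functor (with strict units) between dg
categories: the components `f_n` only depend on the first `n` entries of a
chain, they are `k`-multilinear, they strictly respect strict units, and they
satisfy the defining equations of an A∞-functor. -/
structure IsAInfFun {D E : DGData k} (F : AInfFunData D E) : Prop where
  ext : ∀ (n : ℕ) (A A' : ℕ → D.Obj) (g g' : ℕ → ℤ)
      (α : D.Chain A g) (α' : D.Chain A' g'),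
      (∀ m, m ≤ n → A m = A' m) → (∀ m, m < n → g m = g' m) →
      (∀ m, m < n → HEq (α m) (α' m)) → HEq (F.f n A g α) (F.f n A' g' α')
  map_add : ∀ (n : ℕ) (A : ℕ → D.Obj) (g : ℕ → ℤ) (α : D.Chain A g) (m : ℕ),
      m < n → ∀ u v : D.Hom (A m) (A (m + 1)) (g m + 1),
      F.f n A g (D.upd0 α m (u + v)) =
        F.f n A g (D.upd0 α m u) + F.f n A g (D.upd0 α m v)
  map_smul : ∀ (n : ℕ) (A : ℕ → D.Obj) (g : ℕ → ℤ) (α : D.Chain A g) (m : ℕ),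
      m < n → ∀ (c : k) (u : D.Hom (A m) (A (m + 1)) (g m + 1)),
      F.f n A g (D.upd0 α m (c • u)) = c • F.f n A g (D.upd0 α m u)
  unit_one : ∀ A₀ : D.Obj,
      F.f 1 (fun _ => A₀) (fun _ => (-1 : ℤ))
          (fun _ => D.cast (by norm_num) (D.id A₀)) =
        E.cast (by norm_num [psum]) (E.id (F.obj A₀))
  unit_vanish : ∀ (n : ℕ) (A : ℕ → D.Obj) (g : ℕ → ℤ) (α : D.Chain A g) (m : ℕ),
      2 ≤ n → m < n → A (m + 1) = A m → g m = -1 →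
      HEq (α m) (D.id (A m)) → F.f n A g α = 0
  eqn : ∀ n, 1 ≤ n → ∀ (A : ℕ → D.Obj) (g : ℕ → ℤ) (α : D.Chain A g),
      eqLhs F n A g α = eqRhs F n A g α

/-- The functor induced on homotopy categories sends (the class of) a closed
degree-0 morphism `φ` to (the class of) `s⁻¹ (f₁ (s φ))`.  We record the
underlying assignment, used to express `H⁰(F)`. -/
def AInfFunData.h0map {D E : DGData k} (F : AInfFunData D E) {A B : D.Obj}
    (φ : D.Hom A B 0) : E.Hom (F.obj A) (F.obj B) 0 :=
  E.hcast (congrArg F.obj rfl) (congrArg F.obj rfl) (by norm_num [psum])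
    (F.f 1 (fun m => if m = 0 then A else B) (fun _ => (-1 : ℤ))
      (fun m => Nat.rec (motive := fun m =>
          D.Hom ((fun m => if m = 0 then A else B) m)
            ((fun m => if m = 0 then A else B) (m + 1)) (-1 + 1))
        (D.cast (by norm_num) φ) (fun _ _ => 0) m))

end P

namespace P

section helpers
variable {k : Type} [Field k]

lemma cast_heq' (D : DGData k) {A B : D.Obj} {i i' : ℤ} (h : i = i')
    (x : D.Hom A B i) : HEq (D.cast h x) x := by subst h; rfl

lemma hcast_heq' (D : DGData k) {A A' B B' : D.Obj} {i i' : ℤ}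
    (hA : A = A') (hB : B = B') (hi : i = i') (x : D.Hom A B i) :
    HEq (D.hcast hA hB hi x) x := by subst hA hB hi; rfl

lemma smul_heq' (D : DGData k) {A A' B B' : D.Obj} {i i' : ℤ}
    (hA : A = A') (hB : B = B') (hi : i = i') (c : k) {x : D.Hom A B i} {y : D.Hom A' B' i'}
    (h : HEq x y) : HEq (c • x) (c • y) := by subst hA hB hi; cases h; rfl

lemma zero_heq' (D : DGData k) {A A' B B' : D.Obj} {i i' : ℤ}
    (hA : A = A') (hB : B = B') (hi : i = i') :
    HEq (0 : D.Hom A B i) (0 : D.Hom A' B' i') := by subst hA hB hi; rfl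

lemma d_eq_zero' (D : DGData k) (hD : IsDGCat D) {A B : D.Obj} {i : ℤ} (x : D.Hom A B i)
    (h : B = A) (hi : i = 0) (c : k) (hx : HEq x (c • D.id A)) : D.d x = 0 := by
  subst h hi; cases hx; rw [hD.d_smul, hD.d_id, smul_zero]

lemma d_zero' (D : DGData k) (hD : IsDGCat D) {A B : D.Obj} {i : ℤ} :
    D.d (0 : D.Hom A B i) = 0 := by
  have := hD.d_smul (0 : k) (0 : D.Hom A B i)
  simpa using this

lemma comp_zero' (D : DGData k) (hD : IsDGCat D) {A B C : D.Obj} {i j : ℤ} (x : D.Hom B C j) :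
    D.comp x (0 : D.Hom A B i) = 0 := by
  have := hD.comp_smul_right (0 : k) x (0 : D.Hom A B i)
  simpa using this

lemma zero_comp' (D : DGData k) (hD : IsDGCat D) {A B C : D.Obj} {i j : ℤ} (x : D.Hom A B i) :
    D.comp (0 : D.Hom B C j) x = 0 := by
  have := hD.comp_smul_left (0 : k) (0 : D.Hom B C j) x
  simpa using this

lemma hcast_zero' (D : DGData k) {A A' B B' : D.Obj} {i i' : ℤ}
    (hA : A = A') (hB : B = B') (hi : i = i') :
    D.hcast hA hB hi (0 : D.Hom A B i) = 0 := by subst hA hB hi; rfl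

lemma comp_sid (D : DGData k) (hD : IsDGCat D) {A B C : D.Obj} {i j : ℤ} (x : D.Hom B C j)
    (y : D.Hom A B i) (h : B = A) (hi : i = 0) (c : k) (hy : HEq y (c • D.id A)) :
    HEq (D.comp x y) (c • x) := by
  subst h hi; cases hy
  rw [hD.comp_smul_right]
  refine smul_heq' D rfl rfl (by simp) c ?_
  have := cast_heq' D (add_zero j) (D.comp x (D.id B))
  rw [hD.comp_id] at this
  exact this.symm

lemma sid_comp (D : DGData k) (hD : IsDGCat D) {A B C : D.Obj} {i j : ℤ} (x : D.Hom A B i)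
    (y : D.Hom B C j) (h : C = B) (hj : j = 0) (c : k) (hy : HEq y (c • D.id B)) :
    HEq (D.comp y x) (c • x) := by
  subst h hj; cases hy
  rw [hD.comp_smul_left]
  refine smul_heq' D rfl rfl (by simp) c ?_
  have := cast_heq' D (zero_add i) (D.comp (D.id C) x)
  rw [hD.id_comp] at this
  exact this.symm

lemma upd0_same (D : DGData k) {A : ℕ → D.Obj} {g : ℕ → ℤ} (α : D.Chain A g)
    (m : ℕ) (v : D.Hom (A m) (A (m + 1)) (g m + 1)) : D.upd0 α m v m = v := by
  simp [DGData.upd0]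

lemma upd0_ne (D : DGData k) {A : ℕ → D.Obj} {g : ℕ → ℤ} (α : D.Chain A g)
    (m : ℕ) (v : D.Hom (A m) (A (m + 1)) (g m + 1)) {t : ℕ} (h : t ≠ m) :
    D.upd0 α m v t = α t := by
  simp [DGData.upd0, h]

lemma upd0_self (D : DGData k) {A : ℕ → D.Obj} {g : ℕ → ℤ} (α : D.Chain A g)
    (m : ℕ) : D.upd0 α m (α m) = α := by
  funext t
  by_cases h : t = m
  · subst h; exact upd0_same D α t _
  · exact upd0_ne D α m _ h

lemma spl_lt (D : DGData k) {A : ℕ → D.Obj} {g : ℕ → ℤ} (α : D.Chain A g)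
    (l j : ℕ) (hj : 1 ≤ j) {w : ℤ} (v : D.Hom (A l) (A (l + j)) (w + 1)) {t : ℕ} (h : t < l) :
    HEq (D.splChain α l j hj v t) (α t) := by
  unfold DGData.splChain; rw [dif_pos h]; exact hcast_heq' ..

lemma spl_eq (D : DGData k) {A : ℕ → D.Obj} {g : ℕ → ℤ} (α : D.Chain A g)
    (l j : ℕ) (hj : 1 ≤ j) {w : ℤ} (v : D.Hom (A l) (A (l + j)) (w + 1)) :
    HEq (D.splChain α l j hj v l) v := by
  unfold DGData.splChain; rw [dif_neg (lt_irrefl l), dif_pos rfl]; exact hcast_heq' ..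

lemma spl_gt (D : DGData k) {A : ℕ → D.Obj} {g : ℕ → ℤ} (α : D.Chain A g)
    (l j : ℕ) (hj : 1 ≤ j) {w : ℤ} (v : D.Hom (A l) (A (l + j)) (w + 1)) {t : ℕ} (h : l < t) :
    HEq (D.splChain α l j hj v t) (α (t + j - 1)) := by
  unfold DGData.splChain; rw [dif_neg (by omega), dif_neg (by omega)]; exact hcast_heq' ..

lemma chain_heq (D : DGData k) {A : ℕ → D.Obj} {g : ℕ → ℤ} (α : D.Chain A g) {s t : ℕ}
    (h : s = t) : HEq (α s) (α t) := by subst h; rfl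

lemma sid_heq (D : DGData k) {A B : D.Obj} (c : k) (h : A = B) :
    HEq (c • D.id A) (c • D.id B) := by subst h; rfl

lemma psum_congr' {g g' : ℕ → ℤ} {n : ℕ} (h : ∀ m, m < n → g m = g' m) :
    psum g n = psum g' n :=
  Finset.sum_congr rfl fun t ht => h t (Finset.mem_range.mp ht)

/-- the chain with the entry `m` removed -/
lemma exists_rem (D : DGData k) {A : ℕ → D.Obj} {g : ℕ → ℤ} (α : D.Chain A g) (m : ℕ)
    (hA : A (m + 1) = A m) :
    ∃ (A' : ℕ → D.Obj) (g' : ℕ → ℤ) (α' : D.Chain A' g'),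
      (∀ t, t ≤ m → A' t = A t) ∧ (∀ t, m ≤ t → A' t = A (t + 1)) ∧
      (∀ t, t < m → g' t = g t) ∧ (∀ t, m ≤ t → g' t = g (t + 1)) ∧
      (∀ t, t < m → HEq (α' t) (α t)) ∧ (∀ t, m ≤ t → HEq (α' t) (α (t + 1))) := by
  have a1 : ∀ t, t ≤ m → (fun t => if t ≤ m then A t else A (t + 1)) t = A t :=
    fun t h => if_pos h
  have a2 : ∀ t, m ≤ t → (fun t => if t ≤ m then A t else A (t + 1)) t = A (t + 1) := by
    intro t h
    rcases h.eq_or_lt with h | h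
    · subst h; simp [hA]
    · exact if_neg (by omega)
  have g1 : ∀ t, t < m → (fun t => if t < m then g t else g (t + 1)) t = g t :=
    fun t h => if_pos h
  have g2 : ∀ t, m ≤ t → (fun t => if t < m then g t else g (t + 1)) t = g (t + 1) :=
    fun t h => if_neg (by omega)
  refine ⟨fun t => if t ≤ m then A t else A (t + 1), fun t => if t < m then g t else g (t + 1),
    fun t => if h : t < m then D.hcast (a1 t h.le).symm (a1 (t + 1) h).symm
        (by rw [g1 t h]) (α t)
      else D.hcast (a2 t (by omega)).symm (a2 (t + 1) (by omega)).symm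
        (by rw [g2 t (by omega)]) (α (t + 1)), a1, a2, g1, g2, ?_, ?_⟩
  · intro t h
    simp only [dif_pos h]
    exact hcast_heq' ..
  · intro t h
    simp only [dif_neg (show ¬ t < m by omega)]
    exact hcast_heq' ..

lemma psum_rem {g g' : ℕ → ℤ} (m : ℕ) (g1 : ∀ t, t < m → g' t = g t)
    (g2 : ∀ t, m ≤ t → g' t = g (t + 1)) (hg : g m = -1) :
    ∀ N, m ≤ N → psum g' N = psum g (N + 1) + 1 := by
  intro N hN
  induction N, hN using Nat.le_induction with
  | base => rw [psum_succ, hg, psum_congr' g1]; ring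
  | succ N hN ih => rw [psum_succ, ih, psum_succ g (N + 1), g2 N hN]; ring

section fun_lemmas
variable {D E : DGData k} (F : AInfFunData D E)
    (hext : ∀ (n : ℕ) (A A' : ℕ → D.Obj) (g g' : ℕ → ℤ)
      (α : D.Chain A g) (α' : D.Chain A' g'),
      (∀ m, m ≤ n → A m = A' m) → (∀ m, m < n → g m = g' m) →
      (∀ m, m < n → HEq (α m) (α' m)) → HEq (F.f n A g α) (F.f n A' g' α'))
    (hsmul : ∀ (n : ℕ) (A : ℕ → D.Obj) (g : ℕ → ℤ) (α : D.Chain A g) (m : ℕ),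
      m < n → ∀ (c : k) (u : D.Hom (A m) (A (m + 1)) (g m + 1)),
      F.f n A g (D.upd0 α m (c • u)) = c • F.f n A g (D.upd0 α m u))
    (hunit_vanish : ∀ (n : ℕ) (A : ℕ → D.Obj) (g : ℕ → ℤ) (α : D.Chain A g) (m : ℕ),
      2 ≤ n → m < n → A (m + 1) = A m → g m = -1 →
      HEq (α m) (D.id (A m)) → F.f n A g α = 0)
    (hunit_one : ∀ A₀ : D.Obj,
      F.f 1 (fun _ => A₀) (fun _ => (-1 : ℤ))
          (fun _ => D.cast (by norm_num) (D.id A₀)) =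
        E.cast (by norm_num [psum]) (E.id (F.obj A₀)))

include hext hsmul in
lemma f_smul' (n : ℕ) {A A' : ℕ → D.Obj} {g g' : ℕ → ℤ} (α : D.Chain A g) (α' : D.Chain A' g')
    (l : ℕ) (hl : l < n) (e : k) (hA : ∀ m, m ≤ n → A m = A' m) (hg : ∀ m, m < n → g m = g' m)
    (h1 : ∀ m, m < n → m ≠ l → HEq (α m) (α' m)) (h2 : HEq (α l) (e • α' l)) :
    HEq (F.f n A g α) (e • F.f n A' g' α') := by
  have := hsmul n A' g' α' l hl e (α' l)
  rw [upd0_self] at this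
  rw [← this]
  refine hext _ _ _ _ _ _ _ hA hg fun m hm => ?_
  by_cases h : m = l
  · subst h; rw [upd0_same]; exact h2
  · rw [upd0_ne D _ _ _ h]; exact h1 m hm h

include hext hsmul in
lemma f_zero' (n : ℕ) {A : ℕ → D.Obj} {g : ℕ → ℤ} (α : D.Chain A g)
    (l : ℕ) (hl : l < n) (h : α l = 0) : F.f n A g α = 0 := by
  have := f_smul' F hext hsmul n α α l hl 0 (fun _ _ => rfl) (fun _ _ => rfl)
    (fun _ _ _ => HEq.rfl) (by rw [h, smul_zero])
  rw [zero_smul] at this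
  exact eq_of_heq this

include hext hsmul hunit_vanish in
lemma f_vanish' (n : ℕ) {A : ℕ → D.Obj} {g : ℕ → ℤ} (α : D.Chain A g)
    (m : ℕ) (hn : 2 ≤ n) (hm : m < n) (hA : A (m + 1) = A m) (hg : g m = -1) (c : k)
    (h : HEq (α m) (c • D.id (A m))) : F.f n A g α = 0 := by
  set u : D.Hom (A m) (A (m + 1)) (g m + 1) :=
    D.hcast rfl hA.symm (by rw [hg]; rfl) (D.id (A m)) with hu
  have h0 : HEq u (D.id (A m)) := hcast_heq' ..
  have := f_smul' F hext hsmul n α (D.upd0 α m u) m hm c (fun _ _ => rfl) (fun _ _ => rfl)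
    (fun t _ ht => by rw [upd0_ne D _ _ _ ht])
    (by rw [upd0_same]
        exact h.trans (smul_heq' D rfl hA.symm (by rw [hg]; rfl) c h0.symm))
  rw [hunit_vanish n A g (D.upd0 α m u) m hn hm hA hg (by rw [upd0_same]; exact h0),
    smul_zero] at this
  exact eq_of_heq this

include hext hsmul hunit_one in
lemma f_one' {A : ℕ → D.Obj} {g : ℕ → ℤ} (α : D.Chain A g)
    (hA : A 1 = A 0) (hg : g 0 = -1) (c : k)
    (h : HEq (α 0) (c • D.id (A 0))) : HEq (F.f 1 A g α) (c • E.id (F.obj (A 0))) := by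
  have := f_smul' F hext hsmul 1 α (A' := fun _ => A 0) (g' := fun _ => -1)
    (fun _ => D.cast (by norm_num) (D.id (A 0))) 0 one_pos c
    (fun m hm => by interval_cases m <;> simp [hA])
    (fun m hm => by interval_cases m; exact hg)
    (fun m hm h => by omega)
    (h.trans (smul_heq' D rfl rfl (by norm_num) c (cast_heq' ..).symm))
  rw [hunit_one] at this
  exact this.trans (smul_heq' E rfl rfl (by norm_num [psum]) c (cast_heq' ..))

include hext hsmul hunit_vanish in
lemma T1 (hD : IsDGCat D) (n : ℕ) {A : ℕ → D.Obj} {g : ℕ → ℤ} (α : D.Chain A g)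
    (m : ℕ) (hm : m < n) (hA : A (m + 1) = A m) (hg : g m = -1) (c : k)
    (h : HEq (α m) (c • D.id (A m))) (l : ℕ) (h1 : 1 ≤ 1) (hl : l + 1 ≤ n) :
    F.f (n - 1 + 1) (splObj A l 1)
            (splG g l 1 (psum (fun m => g (l + m)) 1 + 1))
            (D.splChain α l 1 h1 (D.blockVal α l 1)) = 0 := by
  have aO : ∀ t, splObj A l 1 t = A t := fun t => by simp [splObj]
  by_cases hlm : l = m
  · subst hlm
    refine f_zero' F hext hsmul _ _ l (by omega) ?_
    have h2 := spl_eq D α l 1 h1 (D.blockVal α l 1)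
    have h3 : D.blockVal α l 1 = 0 := by
      apply eq_of_heq
      unfold DGData.blockVal
      refine (cast_heq' _ _ _).trans ?_
      rw [d_eq_zero' D hD (α l) hA (by rw [hg]; rfl) c h, neg_zero]
      exact zero_heq' D rfl rfl (by simp [psum_one])
    rw [h3] at h2 ⊢
    exact eq_of_heq (h2.trans (zero_heq' D (aO _).symm (aO _).symm (by rw [splG_eq rfl])))
  · refine f_vanish' F hext hsmul hunit_vanish _ _ m (by omega) (by omega) (by rw [aO, aO, hA])
      ?_ c ?_
    · rcases lt_or_gt_of_ne hlm with h' | h'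
      · rw [splG_gt (by omega) (by omega), show m + 1 - 1 = m from rfl, hg]
      · rw [splG_lt h', hg]
    · refine HEq.trans ?_ (h.trans (sid_heq D c (aO m).symm))
      rcases lt_or_gt_of_ne hlm with h' | h'
      · exact spl_gt D α l 1 h1 _ h'
      · exact spl_lt D α l 1 h1 _ h'

include hext hsmul hunit_vanish in
lemma T2 (n : ℕ) {A : ℕ → D.Obj} {g : ℕ → ℤ} (α : D.Chain A g)
    (m : ℕ) (hm : m < n) (hA : A (m + 1) = A m) (hg : g m = -1) (c : k)
    (h : HEq (α m) (c • D.id (A m))) (l : ℕ) (h1 : 1 ≤ 2) (hl : l + 2 ≤ n)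
    (n1 : l ≠ m) (n2 : l + 1 ≠ m) :
    F.f (n - 2 + 1) (splObj A l 2)
            (splG g l 2 (psum (fun m => g (l + m)) 2 + 1))
            (D.splChain α l 2 h1 (D.blockVal α l 2)) = 0 := by
  rcases lt_or_gt_of_ne n1 with h' | h'
  · obtain ⟨p, rfl⟩ : ∃ p, m = p + 1 := ⟨m - 1, by omega⟩
    have e1 : splObj A l 2 p = A (p + 1) := splObj_gt A (by omega)
    have e2 : splObj A l 2 (p + 1) = A (p + 1 + 1) := splObj_gt A (by omega)
    refine f_vanish' F hext hsmul hunit_vanish _ _ p (by omega) (by omega) (by rw [e1, e2, hA])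
      ?_ c ?_
    · rw [splG_gt (by omega) (by omega)]; exact hg
    · exact (spl_gt D α l 2 h1 _ (by omega)).trans (h.trans (sid_heq D c e1.symm))
  · have e1 : splObj A l 2 m = A m := splObj_le A (by omega)
    have e2 : splObj A l 2 (m + 1) = A (m + 1) := splObj_le A (by omega)
    refine f_vanish' F hext hsmul hunit_vanish _ _ m (by omega) (by omega) (by rw [e1, e2, hA])
      ?_ c ?_
    · rw [splG_lt h', hg]
    · exact (spl_lt D α l 2 h1 _ h').trans (h.trans (sid_heq D c e1.symm))

lemma block2 (D : DGData k) {A : ℕ → D.Obj} {g : ℕ → ℤ} (α : D.Chain A g) (l : ℕ)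
    {B C : D.Obj} {i : ℤ} (x : D.Hom B C i) (c : k) (hB : A l = B) (hC : A (l + 2) = C)
    (hi : g l + g (l + 1) + 2 = i)
    (h : HEq (D.comp (α (l + 1)) (α l)) (c • x)) :
    HEq (D.blockVal α l 2) (((-1 : k) ^ (g (l + 1) + 1) * c) • x) := by
  unfold DGData.blockVal
  rw [mul_smul]
  refine smul_heq' D hB hC ?_ _ ((cast_heq' _ _ _).trans h)
  simp only [psum_two, Nat.add_zero]; rw [← hi]; ring

section rem
variable {A : ℕ → D.Obj} {g : ℕ → ℤ} (α : D.Chain A g) (m : ℕ)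
  {A' : ℕ → D.Obj} {g' : ℕ → ℤ} (α' : D.Chain A' g')
  (a1 : ∀ t, t ≤ m → A' t = A t) (a2 : ∀ t, m ≤ t → A' t = A (t + 1))
  (g1 : ∀ t, t < m → g' t = g t) (g2 : ∀ t, m ≤ t → g' t = g (t + 1))
  (b1 : ∀ t, t < m → HEq (α' t) (α t)) (b2 : ∀ t, m ≤ t → HEq (α' t) (α (t + 1)))
include a1 a2 g1 g2 b1 b2

include hext hsmul in
lemma T2a (hD : IsDGCat D) (n : ℕ) (hA : A (m + 1) = A m) (hg : g m = -1) (c : k)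
    (h : HEq (α m) (c • D.id (A m))) (h1 : 1 ≤ 2) (hl : m + 2 ≤ n) :
    HEq (F.f (n - 2 + 1) (splObj A m 2)
            (splG g m 2 (psum (fun t => g (m + t)) 2 + 1))
            (D.splChain α m 2 h1 (D.blockVal α m 2)))
      (((-1 : k) ^ (g (m + 1) + 1) * c) • F.f (n - 1) A' g' α') := by
  rw [show n - 1 = n - 2 + 1 by omega]
  refine f_smul' F hext hsmul _ _ _ m (by omega) _ ?_ ?_ ?_ ?_
  · intro t _
    by_cases ht : t ≤ m
    · rw [splObj_le A ht, a1 t ht]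
    · rw [splObj_gt A ht, a2 t (by omega)]; rfl
  · intro t _
    rcases lt_trichotomy t m with ht | ht | ht
    · rw [splG_lt ht, g1 t ht]
    · rw [splG_eq ht, g2 t ht.ge, psum_two, ht, Nat.add_zero, hg]; ring
    · rw [splG_gt (by omega) (by omega), g2 t ht.le]; rfl
  · intro t _ ht
    rcases lt_or_gt_of_ne ht with ht | ht
    · exact (spl_lt D α m 2 h1 _ ht).trans (b1 t ht).symm
    · exact (spl_gt D α m 2 h1 _ ht).trans (b2 t ht.le).symm
  · refine (spl_eq D α m 2 h1 _).trans ?_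
    refine block2 D α m (α' m) c (a1 m le_rfl).symm (a2 (m + 1) (by omega)).symm
      (by rw [g2 m le_rfl, hg]; ring) ?_
    refine (comp_sid D hD (α (m + 1)) (α m) hA (by rw [hg]; rfl) c h).trans ?_
    exact smul_heq' D (a2 m le_rfl).symm (a2 (m + 1) (by omega)).symm
      (by rw [g2 m le_rfl]) c (b2 m le_rfl).symm

include hext hsmul in
lemma T2b (hD : IsDGCat D) (n : ℕ) (hA : A (m + 1) = A m) (hg : g m = -1) (c : k)
    (h : HEq (α m) (c • D.id (A m))) (h1 : 1 ≤ 2) (l : ℕ) (hlm : l + 1 = m) (hl : l + 2 ≤ n) :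
    HEq (F.f (n - 2 + 1) (splObj A l 2)
            (splG g l 2 (psum (fun t => g (l + t)) 2 + 1))
            (D.splChain α l 2 h1 (D.blockVal α l 2)))
      (c • F.f (n - 1) A' g' α') := by
  subst hlm
  rw [show n - 1 = n - 2 + 1 by omega]
  refine f_smul' F hext hsmul _ _ _ l (by omega) _ ?_ ?_ ?_ ?_
  · intro t _
    by_cases ht : t ≤ l
    · rw [splObj_le A ht, a1 t (by omega)]
    · rw [splObj_gt A ht, a2 t (by omega)]; rfl
  · intro t _
    rcases lt_trichotomy t l with ht | ht | ht
    · rw [splG_lt ht, g1 t (by omega)]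
    · rw [splG_eq ht, g1 t (by omega), psum_two, ht, Nat.add_zero, hg]; ring
    · rw [splG_gt (by omega) (by omega), g2 t (by omega)]; rfl
  · intro t _ ht
    rcases lt_or_gt_of_ne ht with ht | ht
    · exact (spl_lt D α l 2 h1 _ ht).trans (b1 t (by omega)).symm
    · exact (spl_gt D α l 2 h1 _ ht).trans (b2 t (by omega)).symm
  · refine (spl_eq D α l 2 h1 _).trans ?_
    have := block2 D α l (α' l) c (a1 l (by omega)).symm (a2 (l + 1) (by omega)).symm
      (by rw [g1 l (by omega), hg]; ring) ?_
    · simpa [hg] using this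
    refine (sid_comp D hD (α l) (α (l + 1)) hA (by rw [hg]; rfl) c h).trans ?_
    exact smul_heq' D (a1 l (by omega)).symm (a1 (l + 1) (by omega)).symm
      (by rw [g1 l (by omega)]) c (b1 l (by omega)).symm

include hext hsmul hunit_one in
/-- right-hand side, identity in first slot -/
lemma U1 (hE : IsDGCat E) (n : ℕ) (hn : 2 ≤ n) (hA : A (m + 1) = A m) (hg : g m = -1) (c : k)
    (h : HEq (α m) (c • D.id (A m))) (hm : m = 0) :
    HEq (E.comp
            (F.f (n - 1) (fun m => A (1 + m)) (fun m => g (1 + m)) (fun m => α (1 + m)))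
            (F.f 1 A g α)) (c • F.f (n - 1) A' g' α') := by
  subst hm
  have e := f_one' F hext hsmul hunit_one α hA hg c h
  refine (comp_sid E hE _ _ (by rw [← hA]) (by rw [psum_one, hg]; rfl) c e).trans ?_
  have gg : ∀ t, g (1 + t) = g' t := fun t => by rw [g2 t (by omega), add_comm]
  have aa : ∀ t, A (1 + t) = A' t := fun t => by rw [a2 t (by omega), add_comm]
  refine smul_heq' E (by rw [← aa]) (by rw [← aa]) ?_ c ?_
  · rw [psum_congr' (fun t _ => gg t)]
  · refine hext _ _ _ _ _ _ _ (fun t _ => aa t) (fun t _ => gg t) fun t _ => ?_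
    exact (chain_heq D α (add_comm 1 t)).trans (b2 t (by omega)).symm

include hext hsmul hunit_one in
/-- right-hand side, identity in last slot -/
lemma U2 (hE : IsDGCat E) (n : ℕ) (hA : A (m + 1) = A m) (hg : g m = -1) (c : k)
    (h : HEq (α m) (c • D.id (A m))) (hm : m + 1 = n) :
    HEq (E.comp
            (F.f (n - m) (fun t => A (m + t)) (fun t => g (m + t)) (fun t => α (m + t)))
            (F.f m A g α)) (c • F.f (n - 1) A' g' α') := by
  subst hm
  rw [show m + 1 - m = 1 by omega, show m + 1 - 1 = m by omega]
  have e := f_one' F hext hsmul hunit_one (A := fun t => A (m + t)) (g := fun t => g (m + t))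
    (fun t => α (m + t)) hA hg c h
  refine (sid_comp E hE _ _ (congrArg F.obj hA) (by rw [psum_one, Nat.add_zero, hg]; rfl) c e).trans
    ?_
  refine smul_heq' E (by rw [a1 0 (by omega)]) (by rw [a1 m le_rfl]) ?_ c ?_
  · rw [psum_congr' (fun t ht => (g1 t ht).symm)]
  · exact hext _ _ _ _ _ _ _ (fun t ht => (a1 t ht).symm) (fun t ht => (g1 t ht).symm)
      fun t ht => (b1 t ht).symm

end rem

end fun_lemmas
end helpers
end P

namespace P

/-- **Statement 16.** Let `A` and `B` be dg categories.  Suppose given a map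
`f` on objects and degree-0 components `f_n` which strictly respect
identities.  Then for every chain of composable morphisms `α^n, …, α^1` of `A`
in which some `α^i` is a scalar multiple of an identity, the defining
A∞-functor equation
`∑ f_n ∘ (1^{⊗i} ⊗ b₁ ⊗ 1^{⊗·}) + ∑ f_{n-1} ∘ (1^{⊗i} ⊗ b₂ ⊗ 1^{⊗·})
  = ∑ b₂ ∘ (f_i ⊗ f_{n-i}) + b₁ ∘ f_n`
is automatically satisfied when evaluated at `(sα^n, …, sα^1)`. -/
theorem statement_16 {k : Type} [Field k] (D E : DGData k)
    (hD : IsDGCat D) (hE : IsDGCat E) (F : AInfFunData D E)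
    -- `f` strictly respects identities:
    (hunit_one : ∀ A₀ : D.Obj,
      F.f 1 (fun _ => A₀) (fun _ => (-1 : ℤ))
          (fun _ => D.cast (by norm_num) (D.id A₀)) =
        E.cast (by norm_num [psum]) (E.id (F.obj A₀)))
    (hunit_vanish : ∀ (n : ℕ) (A : ℕ → D.Obj) (g : ℕ → ℤ) (α : D.Chain A g) (m : ℕ),
      2 ≤ n → m < n → A (m + 1) = A m → g m = -1 →
      HEq (α m) (D.id (A m)) → F.f n A g α = 0)
    -- and the components only depend on the listed entries and are multilinear:
    (hext : ∀ (n : ℕ) (A A' : ℕ → D.Obj) (g g' : ℕ → ℤ)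
      (α : D.Chain A g) (α' : D.Chain A' g'),
      (∀ m, m ≤ n → A m = A' m) → (∀ m, m < n → g m = g' m) →
      (∀ m, m < n → HEq (α m) (α' m)) → HEq (F.f n A g α) (F.f n A' g' α'))
    (hadd : ∀ (n : ℕ) (A : ℕ → D.Obj) (g : ℕ → ℤ) (α : D.Chain A g) (m : ℕ),
      m < n → ∀ u v : D.Hom (A m) (A (m + 1)) (g m + 1),
      F.f n A g (D.upd0 α m (u + v)) =
        F.f n A g (D.upd0 α m u) + F.f n A g (D.upd0 α m v))
    (hsmul : ∀ (n : ℕ) (A : ℕ → D.Obj) (g : ℕ → ℤ) (α : D.Chain A g) (m : ℕ),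
      m < n → ∀ (c : k) (u : D.Hom (A m) (A (m + 1)) (g m + 1)),
      F.f n A g (D.upd0 α m (c • u)) = c • F.f n A g (D.upd0 α m u)) :
    -- conclusion: the A∞-functor equation holds on every chain one of whose
    -- entries is a scalar multiple of an identity
    ∀ (n : ℕ), 1 ≤ n → ∀ (A : ℕ → D.Obj) (g : ℕ → ℤ) (α : D.Chain A g) (m : ℕ),
      m < n → ∀ c : k, A (m + 1) = A m → g m = -1 →
      HEq (α m) (c • D.id (A m)) →
      eqLhs F n A g α = eqRhs F n A g α := by
  intro n hn A g α m hm c hA hg h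
  have hv := f_vanish' F hext hsmul hunit_vanish
  by_cases hn1 : n = 1
  · subst hn1
    obtain rfl : m = 0 := by omega
    have hl : eqLhs F 1 A g α = 0 := by
      unfold eqLhs
      refine Finset.sum_eq_zero fun x hx => ?_
      obtain ⟨l, j⟩ := x
      split_ifs with hc
      · obtain rfl : j = 1 := by simp only at hc; omega
        have := T1 F hext hsmul hunit_vanish hD 1 α 0 hm hA hg c h l hc.1 hc.2
        simp only at this ⊢
        rw [this, hcast_zero', smul_zero]
      · rfl
    have hr : eqRhs F 1 A g α = 0 := by
      unfold eqRhs
      rw [Finset.sum_eq_zero, zero_add]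
      · rw [d_eq_zero' E hE _ (congrArg F.obj hA) (by rw [psum_one, hg]; rfl) c
          (f_one' F hext hsmul hunit_one α hA hg c h), neg_zero]
      · intro t _
        rw [dif_neg (by omega)]
    rw [hl, hr]
  have hn2 : 2 ≤ n := by omega
  obtain ⟨A', g', α', a1, a2, g1, g2, b1, b2⟩ := exists_rem D α m hA
  have hdeg : psum g' (n - 1) = psum g n + 1 := by
    rw [psum_rem m g1 g2 hg (n - 1) (by omega), show n - 1 + 1 = n by omega]
  have hA0 : F.obj (A' 0) = F.obj (A 0) := by rw [a1 0 (by omega)]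
  have hAn : F.obj (A' (n - 1)) = F.obj (A n) := by
    rw [a2 (n - 1) (by omega), show n - 1 + 1 = n by omega]
  obtain ⟨R, hR⟩ : ∃ R : E.Hom (F.obj (A 0)) (F.obj (A n)) ((psum g n + 1) + 1),
      HEq R (F.f (n - 1) A' g' α') :=
    ⟨E.hcast hA0 hAn (by rw [hdeg]) (F.f (n - 1) A' g' α'), hcast_heq' ..⟩
  have key : ∀ (e : k) {B C : E.Obj} {i : ℤ} (x : E.Hom B C i) (hB : B = F.obj (A 0))
      (hC : C = F.obj (A n)) (hi : i = psum g n + 1 + 1),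
      HEq x (e • F.f (n - 1) A' g' α') → E.hcast hB hC hi x = e • R := by
    intro e B C i x hB hC hi hx
    refine eq_of_heq ((hcast_heq' ..).trans (hx.trans ?_))
    exact smul_heq' E hA0 hAn (by rw [hdeg]) e hR.symm
  set Q := ((-1 : k) ^ (psum g n - psum g (m + 1)) * c) • R with hQ
  have hl : eqLhs F n A g α = (if m + 2 ≤ n then -Q else 0) + (if 1 ≤ m then Q else 0) := by
    have hterm : ∀ l ∈ Finset.range n, (∑ j ∈ Finset.range 3,
        if h : 1 ≤ j ∧ l + j ≤ n then
      ((-1 : k) ^ (psum g n - psum g (l + j))) •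
        E.hcast (congrArg F.obj (splObj_zero A l j))
          (congrArg F.obj (splObj_last A h.1 h.2))
          (by rw [psum_splG g h.1 h.2])
          (F.f (n - j + 1) (splObj A l j)
            (splG g l j (psum (fun m => g (l + m)) j + 1))
            (D.splChain α l j h.1 (D.blockVal α l j)))
        else 0) = (if l = m then (if m + 2 ≤ n then -Q else 0) else 0) +
          (if l = m - 1 then (if 1 ≤ m then Q else 0) else 0) := by
      intro l hl
      have hl := Finset.mem_range.mp hl
      rw [Finset.sum_range_succ, Finset.sum_range_succ, Finset.sum_range_one,
        dif_neg (by omega), zero_add, dif_pos (by omega),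
        T1 F hext hsmul hunit_vanish hD n α m hm hA hg c h l le_rfl (by omega),
        hcast_zero', smul_zero, zero_add]
      by_cases hl2 : l + 2 ≤ n
      · rw [dif_pos ⟨by omega, hl2⟩]
        by_cases e1 : l = m
        · subst e1
          rw [key _ _ _ _ _ (T2a F hext hsmul α l α' a1 a2 g1 g2 b1 b2 hD n hA hg c h _ hl2),
            if_pos rfl, if_pos hl2]
          have : (if l = l - 1 then (if 1 ≤ l then Q else 0) else 0) = 0 := by
            split_ifs <;> first | rfl | omega
          rw [this, add_zero, hQ, ← neg_smul, smul_smul, ← mul_assoc,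
            ← zpow_add₀ (by simp), ← neg_mul,
            show psum g (l + 2) = psum g (l + 1) + g (l + 1) from psum_succ g (l + 1),
            show psum g n - (psum g (l + 1) + g (l + 1)) + (g (l + 1) + 1)
              = psum g n - psum g (l + 1) + 1 by ring, zpow_add₀ (by simp), zpow_one]
          congr 2
          ring
        · by_cases e2 : l + 1 = m
          · rw [key _ _ _ _ _ (T2b F hext hsmul α m α' a1 a2 g1 g2 b1 b2 hD n hA hg c h _ l e2 hl2),
              if_neg e1, if_pos (by omega), if_pos (by omega), zero_add, hQ, smul_smul, ← e2]
          · rw [T2 F hext hsmul hunit_vanish n α m hm hA hg c h l _ hl2 e1 e2, hcast_zero',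
              smul_zero, if_neg e1, zero_add]
            split_ifs <;> first | rfl | omega
      · rw [dif_neg (by omega)]
        split_ifs <;> first | omega | simp
    unfold eqLhs
    rw [Finset.sum_product]
    refine (Finset.sum_congr rfl hterm).trans ?_
    rw [Finset.sum_add_distrib, Finset.sum_ite_eq', Finset.sum_ite_eq',
      if_pos (Finset.mem_range.mpr hm), if_pos (Finset.mem_range.mpr (by omega))]
  have hr : eqRhs F n A g α = (if m = 0 then -Q else 0) + (if m + 1 = n then Q else 0) := by
    have hterm : ∀ t ∈ Finset.range n, (if h : 1 ≤ t ∧ t < n then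
      ((-1 : k) ^ (psum g n - psum g t + 1)) •
        E.hcast rfl (congrArg F.obj (congrArg A (by omega : t + (n - t) = n)))
          (by rw [psum_shift g t (n - t), show t + (n - t) = n from by omega]; ring)
          (E.comp
            (F.f (n - t) (fun m => A (t + m)) (fun m => g (t + m)) (fun m => α (t + m)))
            (F.f t A g α))
        else 0) = (if t = 1 then (if m = 0 then -Q else 0) else 0) +
          (if t = n - 1 then (if m + 1 = n then Q else 0) else 0) := by
      intro t ht
      have ht := Finset.mem_range.mp ht
      by_cases ht1 : 1 ≤ t
      · rw [dif_pos ⟨ht1, ht⟩]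
        by_cases htm : m < t
        · rw [if_neg (show ¬ m + 1 = n by omega), ite_self]
          by_cases ht2 : 2 ≤ t
          · rw [hv t α m ht2 htm hA hg c h, comp_zero' E hE, hcast_zero', smul_zero,
              if_neg (by omega), add_zero]
          · obtain rfl : t = 1 := by omega
            have hm0 : m = 0 := by omega
            rw [key _ _ _ _ _ (U1 F hext hsmul hunit_one α m α' a1 a2 g1 g2 b1 b2 hE n hn2
              hA hg c h hm0), if_pos rfl, if_pos hm0, add_zero, hQ, hm0, ← neg_smul, smul_smul,
              zpow_add₀ (by simp), zpow_one, zero_add]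
            congr 1
            ring
        · rw [if_neg (show ¬ m = 0 by omega), ite_self, zero_add]
          by_cases hmn : m + 1 = n
          · by_cases htm' : t = m
            · subst htm'
              rw [key _ _ _ _ _ (U2 F hext hsmul hunit_one α t α' a1 a2 g1 g2 b1 b2 hE n
                hA hg c h hmn), if_pos (by omega), if_pos hmn, hQ, smul_smul]
              subst hmn
              congr 2
              rw [psum_succ, hg]
              simp
            · rw [hv (n - t) (A := fun m => A (t + m)) (g := fun m => g (t + m))
                (fun m => α (t + m)) (m - t) (by omega) (by omega) ?_ ?_ c ?_,
                zero_comp' E hE, hcast_zero', smul_zero, if_neg (by omega)]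
              · simp only [← add_assoc, show t + (m - t) = m by omega]; exact hA
              · simp only [show t + (m - t) = m by omega]; exact hg
              · refine (chain_heq D α (show t + (m - t) = m by omega)).trans (h.trans ?_)
                exact sid_heq D c (congrArg A (by omega))
          · rw [hv (n - t) (A := fun m => A (t + m)) (g := fun m => g (t + m))
                (fun m => α (t + m)) (m - t) (by omega) (by omega) ?_ ?_ c ?_,
                zero_comp' E hE, hcast_zero', smul_zero, if_neg hmn, ite_self]
            · simp only [← add_assoc, show t + (m - t) = m by omega]; exact hA
            · simp only [show t + (m - t) = m by omega]; exact hg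
            · refine (chain_heq D α (show t + (m - t) = m by omega)).trans (h.trans ?_)
              exact sid_heq D c (congrArg A (by omega))
      · rw [dif_neg (by omega)]
        split_ifs <;> first | omega | simp
    unfold eqRhs
    rw [hv n α m hn2 hm hA hg c h, d_zero' E hE, neg_zero, add_zero]
    refine (Finset.sum_congr rfl hterm).trans ?_
    rw [Finset.sum_add_distrib, Finset.sum_ite_eq', Finset.sum_ite_eq',
      if_pos (Finset.mem_range.mpr (by omega)), if_pos (Finset.mem_range.mpr (by omega))]
  rw [hl, hr]
  split_ifs <;> first | omega | simp

end P
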